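/- Let n be a natural number, Ω a finite type, c ≥ 0 a real number, and μ, ν : Fin n → Ω → ℝ functions with μ k ω > 0, ν k ω > 0, and |Real.log (μ k ω / ν k ω)| ≤ c for all k ∈ Fin n and ω ∈ Ω. Then for every nonempty finite set A of functions s : Fin n → Ω, |Real.log ( (∑_{s∈A} ∏_{k} μ k (s k)) / (∑_{s∈A} ∏_{k} ν k (s k)) )| ≤ c·n. -/

import Mathlib

/-! The log ratio of two products is the sum of the log ratios of the factors, so bounds on the
factors add up. The log ratio of two sums obeys whatever bound `C` holds termwise, because
`a ≤ exp C * b` and `b ≤ exp C * a` are linear in `a` and `b` and may be summed. The likelihood of a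
set of signal sequences is a sum of products with one factor per period, which costs `c` per period
and nothing for the size of the set. -/

open Finset

theorem abs_log_div_le_iff {a b C : ℝ} (ha : 0 < a) (hb : 0 < b) :
    |Real.log (a / b)| ≤ C ↔ a ≤ Real.exp C * b ∧ b ≤ Real.exp C * a := by
  rw [abs_le', ← Real.log_inv, inv_div, Real.log_le_iff_le_exp (div_pos ha hb),
    Real.log_le_iff_le_exp (div_pos hb ha), div_le_iff₀ hb, div_le_iff₀ ha]

section BigOperators

variable {ι : Type*} {s : Finset ι} {f g : ι → ℝ}

theorem abs_log_prod_div_prod_le {c : ι → ℝ} (hf : ∀ i ∈ s, f i ≠ 0) (hg : ∀ i ∈ s, g i ≠ 0)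
    (hfg : ∀ i ∈ s, |Real.log (f i / g i)| ≤ c i) :
    |Real.log ((∏ i ∈ s, f i) / ∏ i ∈ s, g i)| ≤ ∑ i ∈ s, c i := by
  rw [← prod_div_distrib, Real.log_prod fun i hi ↦ div_ne_zero (hf i hi) (hg i hi)]
  exact (abs_sum_le_sum_abs _ _).trans (sum_le_sum hfg)

theorem abs_log_sum_div_sum_le {C : ℝ} (hs : s.Nonempty) (hf : ∀ i ∈ s, 0 < f i)
    (hg : ∀ i ∈ s, 0 < g i) (hfg : ∀ i ∈ s, |Real.log (f i / g i)| ≤ C) :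
    |Real.log ((∑ i ∈ s, f i) / ∑ i ∈ s, g i)| ≤ C := by
  have hle : ∀ i ∈ s, f i ≤ Real.exp C * g i ∧ g i ≤ Real.exp C * f i := fun i hi ↦
    (abs_log_div_le_iff (hf i hi) (hg i hi)).1 (hfg i hi)
  rw [abs_log_div_le_iff (sum_pos hf hs) (sum_pos hg hs), mul_sum, mul_sum]
  exact ⟨sum_le_sum fun i hi ↦ (hle i hi).1, sum_le_sum fun i hi ↦ (hle i hi).2⟩

end BigOperators

theorem private_likelihood_bound_general {ι : Type*} [Fintype ι] {Ω : ι → Type*} {c : ι → ℝ}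
    {μ ν : ∀ k, Ω k → ℝ} (hμ : ∀ k ω, 0 < μ k ω) (hν : ∀ k ω, 0 < ν k ω)
    (hbd : ∀ k ω, |Real.log (μ k ω / ν k ω)| ≤ c k)
    {A : Finset (∀ k, Ω k)} (hA : A.Nonempty) :
    |Real.log ((∑ s ∈ A, ∏ k, μ k (s k)) / (∑ s ∈ A, ∏ k, ν k (s k)))| ≤ ∑ k, c k :=
  abs_log_sum_div_sum_le hA (fun s _ ↦ prod_pos fun k _ ↦ hμ k (s k))
    (fun s _ ↦ prod_pos fun k _ ↦ hν k (s k)) fun s _ ↦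
      abs_log_prod_div_prod_le (fun k _ ↦ (hμ k (s k)).ne') (fun k _ ↦ (hν k (s k)).ne')
        fun k _ ↦ hbd k (s k)

/-- Abstract content of Lemma 4 of the paper: the private likelihood of any
event (a set of signal sequences) is bounded by `c * n`. -/
theorem private_likelihood_bound (n : ℕ) (Ω : Type*) [Fintype Ω] (c : ℝ) (hc : 0 ≤ c)
    (μ ν : Fin n → Ω → ℝ)
    (hμ : ∀ k ω, 0 < μ k ω) (hν : ∀ k ω, 0 < ν k ω)
    (hbd : ∀ k ω, |Real.log (μ k ω / ν k ω)| ≤ c)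
    (A : Finset (Fin n → Ω)) (hA : A.Nonempty) :
    |Real.log ((∑ s ∈ A, ∏ k, μ k (s k)) / (∑ s ∈ A, ∏ k, ν k (s k)))| ≤ c * n := by
  simpa [mul_comm c] using private_likelihood_bound_general hμ hν hbd hA
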